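/- arXiv:1902.03299 — 2 statements merged into one kernel-verified Lean document; each statement's English description precedes it below -/
import Mathlib

section
/- Let X be a real vector space and let A be a nonempty convex subset of X with cor(A) ≠ ∅. Then the complement of the algebraic closure of the complement of lin(A) equals the algebraic interior of A: X \ lin(X \ lin(A)) = cor(A). -/
/-!
The key fact is the accessibility lemma for a convex set `A`: a segment from a point `c` of the
core to a point `b` of the algebraic closure lies in the core, except possibly for its endpoint `b`
(`segment_cor_lin`).

If `x` lies in the core of `A`, then on every ray from `x` the points near `x` lie in `A`, so `x` is
not accessible from the complement of `lin A`. Conversely, let `x` lie outside `lin ((lin A)ᶜ)` and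
fix `c ≠ x` in the core (if `c = x`, there is nothing to prove). The half-open segment from `2x - c`
to `x` cannot avoid `lin A`, so it contains a point `z = x + l • (x - c)` of `lin A` with
`0 < l ≤ 1`. Since `x` is strictly between `c` and `z`, the accessibility lemma puts `x` in the
core.
-/

/-- The algebraic interior (core) of a set `S` in a real vector space. -/
def algCor {X : Type*} [AddCommGroup X] [Module ℝ X] (S : Set X) : Set X :=
  {x | ∀ y : X, ∃ lb : ℝ, 0 < lb ∧ ∀ lam : ℝ, lam ∈ Set.Icc (0 : ℝ) lb → x + lam • y ∈ S}

/-- The algebraic closure (lin) of a set `S` in a real vector space: `S` together with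
all points linearly accessible from `S`. -/
def algLin {X : Type*} [AddCommGroup X] [Module ℝ X] (S : Set X) : Set X :=
  S ∪ {xb | ∃ x ∈ S, x ≠ xb ∧
    ∀ lam : ℝ, lam ∈ Set.Ioc (0 : ℝ) 1 → lam • x + (1 - lam) • xb ∈ S}

theorem algCor_subset {X : Type*} [AddCommGroup X] [Module ℝ X] (A : Set X) : algCor A ⊆ A := by
  intro x hx
  obtain ⟨lb, hlb, h⟩ := hx 0
  simpa using h 0 ⟨le_rfl, hlb.le⟩

theorem segment_cor_mem {X : Type*} [AddCommGroup X] [Module ℝ X] {A : Set X}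
    (hconv : Convex ℝ A) {c b : X} (hc : c ∈ algCor A) (hb : b ∈ A) {s : ℝ}
    (hs0 : 0 < s) (hs1 : s ≤ 1) : s • c + (1 - s) • b ∈ algCor A := by
  intro y
  obtain ⟨lb, hlb, h⟩ := hc y
  refine ⟨s * lb, by positivity, fun l hl => ?_⟩
  have hmem := h (l / s) ⟨div_nonneg hl.1 hs0.le, by rw [div_le_iff₀ hs0]; linarith [hl.2]⟩
  have key := hconv hmem hb hs0.le (sub_nonneg.2 hs1) (by ring)
  convert key using 1
  match_scalars <;> field_simp

/-- Every point other than `b` of a segment from a core point `c` to a point `b` of the algebraic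
closure lies in the set: moving `c` slightly in the direction `b - a` compensates for replacing `b`
by a nearby point of the segment from `b` to `a`. -/
theorem segment_cor_lin_mem {X : Type*} [AddCommGroup X] [Module ℝ X] {A : Set X}
    (hconv : Convex ℝ A) {c b : X} (hc : c ∈ algCor A) (hb : b ∈ algLin A) {s : ℝ}
    (hs0 : 0 < s) (hs1 : s ≤ 1) : s • c + (1 - s) • b ∈ A := by
  rcases hb with hb | ⟨a, -, -, hab⟩
  · exact algCor_subset A (segment_cor_mem hconv hc hb hs0 hs1)
  rcases hs1.eq_or_lt with rfl | hs1
  · simpa using algCor_subset A hc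
  have hs : 0 < 1 - s := sub_pos.2 hs1
  obtain ⟨lb, hlb, h⟩ := hc (b - a)
  -- The bound `(1 - s) / s` makes the matching parameter `s * m / (1 - s)` at most `1`.
  obtain ⟨m, hm0, hm1, hm2⟩ : ∃ m : ℝ, 0 < m ∧ m ≤ lb ∧ m ≤ (1 - s) / s :=
    ⟨min lb ((1 - s) / s), lt_min hlb (div_pos hs hs0), min_le_left _ _, min_le_right _ _⟩
  rw [le_div_iff₀ hs0] at hm2
  have hb' := hab (s * m / (1 - s)) ⟨by positivity, by rw [div_le_one hs]; linarith⟩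
  have key := hconv (h m ⟨hm0.le, hm1⟩) hb' hs0.le hs.le (by ring)
  convert key using 1
  have hs' : 1 - s ≠ 0 := hs.ne'
  match_scalars <;> field_simp <;> ring

theorem segment_cor_lin {X : Type*} [AddCommGroup X] [Module ℝ X] {A : Set X}
    (hconv : Convex ℝ A) {c b : X} (hc : c ∈ algCor A) (hb : b ∈ algLin A) {s : ℝ}
    (hs0 : 0 < s) (hs1 : s ≤ 1) : s • c + (1 - s) • b ∈ algCor A := by
  -- The point lies between `c` and the point with parameter `s / 2`, which is in `A`.
  have hq := segment_cor_lin_mem hconv hc hb (s := s / 2) (by linarith) (by linarith)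
  have h2 : 0 < 2 - s := by linarith
  have key := segment_cor_mem hconv hc hq (s := s / (2 - s)) (by positivity)
    (by rw [div_le_one h2]; linarith)
  convert key using 1
  have h2' : 2 - s ≠ 0 := h2.ne'
  match_scalars <;> field_simp <;> ring

theorem stmt10 {X : Type*} [AddCommGroup X] [Module ℝ X]
    (A : Set X) (hA : A.Nonempty) (hconv : Convex ℝ A)
    (hcor : (algCor A).Nonempty) :
    (algLin (algLin A)ᶜ)ᶜ = algCor A := by
  apply Set.Subset.antisymm
  · intro x hx
    obtain ⟨c, hc⟩ := hcor
    have hxA : x ∈ algLin A := by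
      by_contra h
      exact hx (Or.inl h)
    by_cases hxc : x = c
    · rwa [hxc]
    obtain ⟨l, hl0, hz⟩ : ∃ l : ℝ, 0 < l ∧ x + l • (x - c) ∈ algLin A := by
      by_contra! hno
      refine hx (Or.inr ⟨x + (1 : ℝ) • (x - c), hno 1 one_pos, ?_, fun l hl => ?_⟩)
      · simpa [sub_eq_zero] using hxc
      · have hl' := hno l hl.1
        have heq : l • (x + (1 : ℝ) • (x - c)) + (1 - l) • x = x + l • (x - c) := by module
        rwa [heq]
    have hl : 0 < 1 + l := by linarith
    have key := segment_cor_lin hconv hc hz (s := l / (1 + l)) (by positivity)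
      (by rw [div_le_one hl]; linarith)
    convert key using 1
    match_scalars <;> field_simp <;> ring
  · rintro x hx (h | ⟨y, -, -, hy⟩)
    · exact h (Or.inl (algCor_subset A hx))
    · obtain ⟨lb, hlb, h⟩ := hx (y - x)
      have hm : 0 < min lb 1 := lt_min hlb one_pos
      refine hy (min lb 1) ⟨hm, min_le_right _ _⟩ (Or.inl ?_)
      convert h (min lb 1) ⟨hm.le, min_le_left _ _⟩ using 1
      module
end

section
/- Let X be a real vector space and let A be a nonempty convex subset of X with cor(A) ≠ ∅. Then lin(X \ lin(X \ lin(A))) = lin(A), i.e., applying algebraic closure, then complement, algebraic closure, complement, and algebraic closure to A yields the same set as applying algebraic closure alone. -/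
section Algebraic

variable {X : Type*} [AddCommGroup X] [Module ℝ X]

theorem algCor_subset_s12 (S : Set X) : algCor S ⊆ S := by
  intro x hx
  obtain ⟨lb, hlb, h⟩ := hx 0
  simpa using h 0 ⟨le_rfl, hlb.le⟩

theorem algLin_mono {S T : Set X} (h : S ⊆ T) : algLin S ⊆ algLin T := by
  rintro x (hx | ⟨y, hy, hne, hseg⟩)
  · exact Or.inl (h hx)
  · exact Or.inr ⟨y, h hy, hne, fun l hl => h (hseg l hl)⟩

theorem mix_mem_algCor {A : Set X} (hA : Convex ℝ A) {a b : X} (ha : a ∈ algCor A) (hb : b ∈ A)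
    {l : ℝ} (hl : l ∈ Set.Ioc (0 : ℝ) 1) : l • a + (1 - l) • b ∈ algCor A := by
  obtain ⟨hl0, hl1⟩ := hl
  intro y
  obtain ⟨s, hs, h⟩ := ha y
  refine ⟨l * s, by positivity, fun t ht => ?_⟩
  have hmem : a + (t / l) • y ∈ A :=
    h _ ⟨div_nonneg ht.1 hl0.le, (div_le_iff₀ hl0).2 (by linarith [ht.2])⟩
  have key := hA hmem hb hl0.le (by linarith : (0 : ℝ) ≤ 1 - l) (by ring)
  convert key using 1
  have : l * (t / l) = t := by field_simp
  rw [smul_add, smul_smul, this]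
  abel

theorem algCor_subset_algCor_algCor {A : Set X} (hA : Convex ℝ A) :
    algCor A ⊆ algCor (algCor A) := by
  intro a ha y
  obtain ⟨s, hs, h⟩ := ha y
  refine ⟨s / 2, by positivity, fun t ht => ?_⟩
  -- `a + t y` is the midpoint of `a` and `a + 2t y ∈ A`.
  have key := mix_mem_algCor hA ha (h (2 * t) ⟨by linarith [ht.1], by linarith [ht.2]⟩)
    (l := 1 / 2) ⟨by norm_num, by norm_num⟩
  convert key using 1
  module

/-- If convex combinations of points of `U`, with positive weight, and points of `S` lie in `T`, the
same holds for
points of `algCor U` and of `algLin S`: moving the second point slightly into `S` is compensated by a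
small move of the first one, which stays in `U`. -/
theorem mix_mem_of_mem_algLin {U S T : Set X}
    (h : ∀ a ∈ U, ∀ b ∈ S, ∀ l ∈ Set.Ioc (0 : ℝ) 1, l • a + (1 - l) • b ∈ T)
    {a y : X} (ha : a ∈ algCor U) (hy : y ∈ algLin S) {l : ℝ} (hl : l ∈ Set.Ioc (0 : ℝ) 1) :
    l • a + (1 - l) • y ∈ T := by
  rcases hy with hy | ⟨x, -, -, hseg⟩
  · exact h a (algCor_subset_s12 U ha) y hy l hl
  have hl0 : 0 < l := hl.1
  obtain ⟨s, hs, hs'⟩ := ha (-((1 - l) / l) • (x - y))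
  have he : min s 1 ∈ Set.Ioc (0 : ℝ) 1 := ⟨lt_min hs one_pos, min_le_right _ _⟩
  have key := h _ (hs' (min s 1) ⟨he.1.le, min_le_left _ _⟩) _ (hseg _ he) l hl
  convert key using 1
  match_scalars <;> field_simp <;> ring

theorem mix_mem_algCor_of_mem_algLin {A : Set X} (hA : Convex ℝ A) {a y : X} (ha : a ∈ algCor A)
    (hy : y ∈ algLin A) {l : ℝ} (hl : l ∈ Set.Ioc (0 : ℝ) 1) :
    l • a + (1 - l) • y ∈ algCor A :=
  mix_mem_of_mem_algLin (fun _ ha' _ hb _ hl' => mix_mem_algCor hA ha' hb hl')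
    (algCor_subset_algCor_algCor hA ha) hy hl

theorem mem_algLin_of_mix_mem {S : Set X} {a y : X} (ha : a ∈ S)
    (h : ∀ l ∈ Set.Ioc (0 : ℝ) 1, l • a + (1 - l) • y ∈ S) : y ∈ algLin S := by
  by_cases hay : a = y
  · exact Or.inl (hay ▸ ha)
  · exact Or.inr ⟨a, ha, hay, h⟩

theorem algLin_algLin_subset {A : Set X} (hA : Convex ℝ A) (hcor : (algCor A).Nonempty) :
    algLin (algLin A) ⊆ algLin A := by
  obtain ⟨a, ha⟩ := hcor
  intro y hy
  refine mem_algLin_of_mix_mem (algCor_subset_s12 A ha) fun l hl => algCor_subset_s12 A ?_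
  exact mix_mem_of_mem_algLin
    (fun _ ha' _ hb _ hl' => mix_mem_algCor_of_mem_algLin hA ha' hb hl')
    (algCor_subset_algCor_algCor hA ha) hy hl

/-- A core point of `S` has an initial piece of every ray inside `S`, so it is not linearly
accessible from the complement of any set containing `S`. -/
theorem algCor_subset_compl_algLin_compl {S T : Set X} (hST : S ⊆ T) :
    algCor S ⊆ (algLin Tᶜ)ᶜ := by
  rintro p hp (hpT | ⟨x, -, -, hseg⟩)
  · exact hpT (hST (algCor_subset_s12 S hp))
  obtain ⟨s, hs, h⟩ := hp (x - p)
  have he : min s 1 ∈ Set.Ioc (0 : ℝ) 1 := ⟨lt_min hs one_pos, min_le_right _ _⟩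
  refine hseg _ he (hST ?_)
  convert h (min s 1) ⟨he.1.le, min_le_left _ _⟩ using 1
  module

end Algebraic

theorem stmt12 {X : Type*} [AddCommGroup X] [Module ℝ X]
    (A : Set X) (hA : A.Nonempty) (hconv : Convex ℝ A)
    (hcor : (algCor A).Nonempty) :
    algLin (algLin (algLin A)ᶜ)ᶜ = algLin A := by
  apply Set.Subset.antisymm
  · have hC : (algLin (algLin A)ᶜ)ᶜ ⊆ algLin A :=
      Set.compl_subset_comm.1 Set.subset_union_left
    exact (algLin_mono hC).trans (algLin_algLin_subset hconv hcor)
  · obtain ⟨a, ha⟩ := hcor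
    intro y hy
    have hC : algCor A ⊆ (algLin (algLin A)ᶜ)ᶜ :=
      algCor_subset_compl_algLin_compl Set.subset_union_left
    exact algLin_mono hC <| mem_algLin_of_mix_mem ha fun l hl =>
      mix_mem_algCor_of_mem_algLin hconv ha hy hl
end
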